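/- Let R : P₂ → ℝ be Lebesgue measurable and C ∈ ℝ. If L₁, L₂ : (0,1) → ℝ are Lebesgue measurable functions each solving the perturbed Spence-Abel system almost everywhere with data (R, C), then L₁ = L₂ almost everywhere on (0,1). -/

import Mathlib

open MeasureTheory Set

/-- The parameter space `P₂ = {(x,y) : 0 < x < y < 1}`. -/
def P2 : Set (ℝ × ℝ) := {p | 0 < p.1 ∧ p.1 < p.2 ∧ p.2 < 1}

/-- `L` solves the perturbed Spence–Abel system almost everywhere with data `(R, C)`. -/
def SolvesAE (R : ℝ × ℝ → ℝ) (C : ℝ) (L : ℝ → ℝ) : Prop :=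
  (∀ᵐ p ∂(volume.restrict P2),
    L p.1 - L p.2 - L (p.1 / p.2) - L ((p.2 - 1) / (p.1 - 1))
      + L (p.1 * (p.2 - 1) / (p.2 * (p.1 - 1))) = R p) ∧
  (∀ᵐ x ∂(volume.restrict (Set.Ioo (0:ℝ) 1)), L (1 - x) = C - L x)

/-!
The difference `F` of two solutions satisfies the homogeneous relation almost everywhere, and that
relation reads `F x = F y + ∑ ± F (exp (ρ i x - ρ i y))` with coordinates `ρ i` whose derivative is
at least `1`. For `x` in a compact interval some `y` makes every term on the right bounded by one
constant, because the exceptional `y` form a set of small measure; hence `F` is locally bounded.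
Averaging the relation in `y` against a bump function then turns each term into a convolution
evaluated at `ρ i x`, so `F` agrees almost everywhere with a smooth function. For smooth `F` the
derivative of the relation, antisymmetrised in its two variables, says that `x (1 - x) F' x`
satisfies the fundamental equation of information, so it is a multiple of the binary entropy. Since
`F` vanishes both at `1 / 2` and at the golden section point `1 + ψ`, Rolle's theorem makes that
multiple zero.
-/

open Filter Function
open scoped ContDiff Topology

theorem volume_inter_preimage_le_of_antilipschitzWith {K : NNReal} {f : ℝ → ℝ} {S : Set ℝ}
    (hf : AntilipschitzWith K (S.domRestrict f)) (E : Set ℝ) :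
    volume (S ∩ f ⁻¹' E) ≤ K * volume E := by
  have himage : S ∩ f ⁻¹' E = Subtype.val '' (S.domRestrict f ⁻¹' E) := by
    rw [domRestrict_eq, preimage_comp, Subtype.image_preimage_coe]
  rw [himage, ← hausdorffMeasure_real,
    isometry_subtype_coe.hausdorffMeasure_image (Or.inl zero_le_one)]
  simpa using hf.hausdorffMeasure_preimage_le zero_le_one E

theorem ae_restrict_comp_of_antilipschitzWith {K : NNReal} {f : ℝ → ℝ} {S : Set ℝ}
    (hS : MeasurableSet S) (hf : AntilipschitzWith K (S.domRestrict f)) {p : ℝ → Prop}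
    (hp : ∀ᵐ t, p t) : ∀ᵐ y ∂volume.restrict S, p (f y) := by
  rw [ae_restrict_iff' hS, ae_iff]
  refine measure_mono_null (t := S ∩ f ⁻¹' {t | ¬ p t}) (fun y hy => by simpa using hy) ?_
  simpa [ae_iff.1 hp] using volume_inter_preimage_le_of_antilipschitzWith hf {t | ¬ p t}

theorem ae_comp_exp_of_ae_restrict {S : Set ℝ} (hS : MeasurableSet S) {p : ℝ → Prop}
    (hp : ∀ᵐ s ∂volume.restrict S, p s) : ∀ᵐ t, Real.exp t ∈ S → p (Real.exp t) := by
  rw [ae_restrict_iff' hS, ae_iff] at hp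
  rw [ae_iff]
  refine measure_mono_null
    (t := Real.log '' ({s | ¬ (s ∈ S → p s)} ∩ {0}ᶜ))
    (fun t ht => ⟨Real.exp t, ⟨ht, (Real.exp_pos t).ne'⟩, Real.log_exp t⟩) ?_
  exact addHaar_image_eq_zero_of_differentiableOn_of_addHaar_eq_zero volume
    (Real.differentiableOn_log.mono inter_subset_right) (measure_inter_null_of_null_left _ hp)

theorem tendsto_measure_natCast_lt_abs_atTop {α : Type*} {mα : MeasurableSpace α} (μ : Measure α)
    [IsFiniteMeasure μ] {f : α → ℝ} (hf : Measurable f) :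
    Tendsto (fun N : ℕ => μ {x | N < |f x|}) atTop (𝓝 0) := by
  have hempty : ⋂ N : ℕ, {x | N < |f x|} = ∅ := by
    refine eq_empty_of_forall_notMem fun x hx => ?_
    obtain ⟨N, hN⟩ := exists_nat_ge |f x|
    exact hN.not_gt (mem_iInter.1 hx N)
  have hanti : Antitone fun N : ℕ => {x | N < |f x|} :=
    fun N M hNM x (hx : M < |f x|) => (Nat.cast_le.2 hNM).trans_lt hx
  simpa [hempty, comp_def] using tendsto_measure_iInter_atTop (μ := μ)
    (fun N : ℕ => (measurableSet_lt measurable_const hf.abs).nullMeasurableSet) hanti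
    ⟨0, measure_ne_top μ _⟩

theorem eqOn_of_ae_ae_eq {X Y Z : Type*} [TopologicalSpace X] [TopologicalSpace Y]
    [TopologicalSpace Z] [T2Space Z] [MeasurableSpace X] [MeasurableSpace Y]
    [OpensMeasurableSpace (X × Y)] {μ : Measure X} {ν : Measure Y} [SFinite ν]
    [(μ.prod ν).IsOpenPosMeasure] {U : Set (X × Y)} (hU : IsOpen U) {f g : X × Y → Z}
    (hf : ContinuousOn f U) (hg : ContinuousOn g U)
    (hfg : ∀ᵐ x ∂μ, ∀ᵐ y ∂ν, (x, y) ∈ U → f (x, y) = g (x, y)) : EqOn f g U := by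
  set B : Set (X × Y) := U ∩ (fun p => (f p, g p)) ⁻¹' (diagonal Z)ᶜ
  have hB : IsOpen B := (hf.prodMk hg).isOpen_inter_preimage hU isClosed_diagonal.isOpen_compl
  have hB_null : μ.prod ν B = 0 := by
    rw [Measure.measure_prod_null hB.measurableSet]
    filter_upwards [hfg] with x hx
    rw [ae_iff] at hx
    refine measure_mono_null ?_ hx
    exact fun y hy h => hy.2 (h hy.1)
  intro p hp
  by_contra hne
  exact (hB.measure_pos (μ.prod ν) ⟨p, hp, hne⟩).ne' hB_null

theorem exists_contDiffOn_ae_eq_of_locally {E G : Type*} [NormedAddCommGroup E] [NormedSpace ℝ E]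
    [SecondCountableTopology E] [MeasurableSpace E] [OpensMeasurableSpace E] {μ : Measure E}
    [μ.IsOpenPosMeasure] [NormedAddCommGroup G] [NormedSpace ℝ G] {n : WithTop ℕ∞} {F : E → G}
    {U : Set E} (hU : MeasurableSet U)
    (hF : ∀ x ∈ U, ∃ V, IsOpen V ∧ x ∈ V ∧ ∃ g, ContDiffOn ℝ n g V ∧ F =ᵐ[μ.restrict V] g) :
    ∃ g, ContDiffOn ℝ n g U ∧ F =ᵐ[μ.restrict U] g := by
  choose! V hV hxV g hg hFg using hF
  have hcompat : ∀ x ∈ U, ∀ y ∈ V x ∩ U, g y y = g x y := by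
    rintro x hx y ⟨hyV, hyU⟩
    have hae : g y =ᵐ[μ.restrict (V x ∩ V y)] g x := by
      filter_upwards [ae_restrict_of_ae_restrict_of_subset inter_subset_right (hFg y hyU),
        ae_restrict_of_ae_restrict_of_subset inter_subset_left (hFg x hx)] with z hzy hzx
      exact hzy.symm.trans hzx
    exact Measure.eqOn_open_of_ae_eq hae ((hV x hx).inter (hV y hyU))
      ((hg y hyU).continuousOn.mono inter_subset_right)
      ((hg x hx).continuousOn.mono inter_subset_left) ⟨hyV, hxV y hyU⟩
  refine ⟨fun x => g x x, fun x hx => ?_, ?_⟩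
  · have hmem : V x ∈ 𝓝 x := (hV x hx).mem_nhds (hxV x hx)
    refine ((hg x hx).contDiffAt hmem).contDiffWithinAt.congr_of_eventuallyEq ?_ rfl
    filter_upwards [mem_nhdsWithin_of_mem_nhds hmem, self_mem_nhdsWithin] with y hyV hyU
    exact hcompat x hx y ⟨hyV, hyU⟩
  · rw [EventuallyEq, ae_restrict_iff' hU, ae_iff]
    refine measure_null_of_locally_null _ fun x hx => ?_
    have hxU : x ∈ U := (Classical.not_imp.1 hx).1
    refine ⟨_, inter_mem_nhdsWithin _ ((hV x hxU).mem_nhds (hxV x hxU)), ?_⟩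
    have hnull := hFg x hxU
    rw [EventuallyEq, ae_restrict_iff' (hV x hxU).measurableSet, ae_iff] at hnull
    refine measure_mono_null ?_ hnull
    rintro y ⟨hy, hyV⟩ h
    exact hy fun hyU => (h hyV).trans (hcompat x hxU y ⟨hyV, hyU⟩).symm

theorem exists_openPartialHomeomorph_of_deriv_ne_zero {f : ℝ → ℝ} {U : Set ℝ} {n : WithTop ℕ∞}
    (hU : IsOpen U) (hinj : InjOn f U) (hf : ContDiffOn ℝ n f U) (hn : n ≠ 0)
    (hderiv : ∀ x ∈ U, deriv f x ≠ 0) :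
    ∃ e : OpenPartialHomeomorph ℝ ℝ, ⇑e = f ∧ e.source = U := by
  have hopen : IsOpenMap (U.domRestrict f) := by
    refine IsOpenMap.of_nhds_le fun x => ?_
    have hstrict : HasStrictDerivAt f (deriv f x) x :=
      (hf.contDiffAt (hU.mem_nhds x.2)).hasStrictDerivAt hn
    have hnhds : map (Subtype.val : U → ℝ) (𝓝 x) = 𝓝 (x : ℝ) :=
      map_nhds_subtype_coe_eq_nhds x.2 (hU.mem_nhds x.2)
    rw [domRestrict_eq, ← map_map, hnhds, hstrict.map_nhds_eq (hderiv x x.2), comp_apply]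
  exact ⟨.ofContinuousOpenRestrict (hinj.toPartialEquiv f U) hf.continuousOn hopen hU, rfl, rfl⟩

/-- The density with respect to Lebesgue measure of the image under `e` of the measure `w dy`
carried by `e.source`. -/
noncomputable def pushforwardDensity (e : OpenPartialHomeomorph ℝ ℝ) (w : ℝ → ℝ) : ℝ → ℝ :=
  e.target.indicator fun t => |deriv e.symm t| * w (e.symm t)

section PushforwardDensity

variable {e : OpenPartialHomeomorph ℝ ℝ} {w : ℝ → ℝ}

theorem support_pushforwardDensity_subset : support (pushforwardDensity e w) ⊆ e '' tsupport w := by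
  intro t ht
  have ht_target : t ∈ e.target := mem_of_indicator_ne_zero ht
  rw [mem_support, pushforwardDensity, indicator_of_mem ht_target] at ht
  exact ⟨e.symm t, subset_tsupport w (right_ne_zero_of_mul ht), e.right_inv ht_target⟩

theorem isCompact_image_tsupport (hw : HasCompactSupport w) (hw_supp : tsupport w ⊆ e.source) :
    IsCompact (e '' tsupport w) :=
  hw.isCompact.image_of_continuousOn (e.continuousOn.mono hw_supp)

theorem hasCompactSupport_pushforwardDensity (hw : HasCompactSupport w)
    (hw_supp : tsupport w ⊆ e.source) : HasCompactSupport (pushforwardDensity e w) :=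
  .of_support_subset_isCompact (isCompact_image_tsupport hw hw_supp)
    support_pushforwardDensity_subset

theorem contDiff_pushforwardDensity (he : ContDiffOn ℝ ∞ e e.source)
    (hderiv : ∀ y ∈ e.source, deriv e y ≠ 0) (hw : ContDiff ℝ ∞ w) (hw_comp : HasCompactSupport w)
    (hw_supp : tsupport w ⊆ e.source) : ContDiff ℝ ∞ (pushforwardDensity e w) := by
  refine contDiff_iff_contDiffAt.2 fun t => ?_
  by_cases ht : t ∈ e.target
  · have hsource := e.map_target ht
    have he_at := he.contDiffAt (e.open_source.mem_nhds hsource)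
    have hderiv_at := (he_at.differentiableAt (by simp)).hasDerivAt
    have hsymm : ContDiffAt ℝ ∞ e.symm t :=
      e.contDiffAt_symm_deriv (hderiv _ hsource) ht hderiv_at he_at
    have hsymm_deriv : deriv e.symm t ≠ 0 := by
      rw [(e.hasDerivAt_symm ht (hderiv _ hsource) hderiv_at).deriv]
      exact inv_ne_zero (hderiv _ hsource)
    have hcontDiffAt : ContDiffAt ℝ ∞ (fun t => |deriv e.symm t| * w (e.symm t)) t :=
      ((hsymm.derivWithin (by simp)).abs hsymm_deriv).mul (hw.contDiffAt.comp t hsymm)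
    exact hcontDiffAt.congr_of_eventuallyEq <|
      eventually_of_mem (e.open_target.mem_nhds ht) fun s hs => indicator_of_mem hs _
  · have hclosed := (isCompact_image_tsupport hw_comp hw_supp).isClosed
    have ht_image : t ∉ e '' tsupport w :=
      fun h => ht (e.image_source_eq_target ▸ image_mono hw_supp h)
    refine contDiffAt_const (c := 0) |>.congr_of_eventuallyEq <|
      eventually_of_mem (hclosed.isOpen_compl.mem_nhds ht_image) fun s hs => ?_
    exact notMem_support.1 fun h => hs (support_pushforwardDensity_subset h)

theorem hasDerivWithinAt_symm_deriv (he : DifferentiableOn ℝ e e.source)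
    (hderiv : ∀ y ∈ e.source, deriv e y ≠ 0) {t : ℝ} (ht : t ∈ e.target) :
    HasDerivWithinAt e.symm (deriv e.symm t) e.target t :=
  have hsource := e.map_target ht
  have he_at := (he.differentiableAt (e.open_source.mem_nhds hsource)).hasDerivAt
  (e.hasDerivAt_symm ht (hderiv _ hsource) he_at).differentiableAt.hasDerivAt.hasDerivWithinAt

theorem pushforwardDensity_mul_eq_indicator (H : ℝ → ℝ) :
    (fun t => pushforwardDensity e w t * H t) =
      e.target.indicator fun t => |deriv e.symm t| • (w (e.symm t) * H (e (e.symm t))) := by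
  ext t
  by_cases ht : t ∈ e.target
  · simp [pushforwardDensity, ht, mul_assoc]
  · simp [pushforwardDensity, ht]

theorem support_mul_subset_source (hw_supp : tsupport w ⊆ e.source) (H : ℝ → ℝ) :
    support (fun y => w y * H (e y)) ⊆ e.source :=
  (support_mul_subset_left _ _).trans ((subset_tsupport w).trans hw_supp)

theorem integrable_mul_comp_iff (he : DifferentiableOn ℝ e e.source)
    (hderiv : ∀ y ∈ e.source, deriv e y ≠ 0) (hw_supp : tsupport w ⊆ e.source) (H : ℝ → ℝ) :
    Integrable (fun y => w y * H (e y)) ↔ Integrable fun t => pushforwardDensity e w t * H t := by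
  rw [pushforwardDensity_mul_eq_indicator, integrable_indicator_iff e.open_target.measurableSet,
    ← integrableOn_image_iff_integrableOn_abs_deriv_smul e.open_target.measurableSet
      (fun t ht => hasDerivWithinAt_symm_deriv he hderiv ht) e.symm.injOn
      (fun y => w y * H (e y)), e.symm_image_target_eq_source,
    integrableOn_iff_integrable_of_support_subset (support_mul_subset_source hw_supp H)]

theorem integral_mul_comp_eq (he : DifferentiableOn ℝ e e.source)
    (hderiv : ∀ y ∈ e.source, deriv e y ≠ 0) (hw_supp : tsupport w ⊆ e.source) (H : ℝ → ℝ) :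
    ∫ y, w y * H (e y) = ∫ t, pushforwardDensity e w t * H t := by
  rw [pushforwardDensity_mul_eq_indicator, integral_indicator e.open_target.measurableSet,
    ← integral_image_eq_integral_abs_deriv_smul e.open_target.measurableSet
      (fun t ht => hasDerivWithinAt_symm_deriv he hderiv ht) e.symm.injOn
      (fun y => w y * H (e y)), e.symm_image_target_eq_source,
    setIntegral_eq_integral_of_forall_compl_eq_zero fun y hy =>
      notMem_support.1 fun h => hy (support_mul_subset_source hw_supp H h)]

end PushforwardDensity

section ConvolutionAlongCoordinate

variable {ρ w G : ℝ → ℝ} {U : Set ℝ}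

theorem integrable_mul_comp_sub (hU : IsOpen U) (hρ : ContDiffOn ℝ ∞ ρ U) (hinj : InjOn ρ U)
    (hderiv : ∀ y ∈ U, deriv ρ y ≠ 0) (hw : ContDiff ℝ ∞ w) (hw_comp : HasCompactSupport w)
    (hw_supp : tsupport w ⊆ U) (hG : LocallyIntegrable G) (u : ℝ) :
    Integrable fun y => w y * G (u - ρ y) := by
  obtain ⟨e, rfl, rfl⟩ :=
    exists_openPartialHomeomorph_of_deriv_ne_zero hU hinj hρ (by simp) hderiv
  rw [integrable_mul_comp_iff (hρ.differentiableOn (by simp)) hderiv hw_supp fun t => G (u - t)]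
  exact (hasCompactSupport_pushforwardDensity hw_comp hw_supp).convolutionExists_left
    (ContinuousLinearMap.mul ℝ ℝ)
    (contDiff_pushforwardDensity hρ hderiv hw hw_comp hw_supp).continuous hG u

theorem contDiff_integral_mul_comp_sub (hU : IsOpen U) (hρ : ContDiffOn ℝ ∞ ρ U)
    (hinj : InjOn ρ U) (hderiv : ∀ y ∈ U, deriv ρ y ≠ 0) (hw : ContDiff ℝ ∞ w)
    (hw_comp : HasCompactSupport w) (hw_supp : tsupport w ⊆ U) (hG : LocallyIntegrable G) :
    ContDiff ℝ ∞ fun u => ∫ y, w y * G (u - ρ y) := by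
  obtain ⟨e, rfl, rfl⟩ :=
    exists_openPartialHomeomorph_of_deriv_ne_zero hU hinj hρ (by simp) hderiv
  simp_rw [fun u => integral_mul_comp_eq (hρ.differentiableOn (by simp)) hderiv hw_supp
    fun t => G (u - t)]
  exact (hasCompactSupport_pushforwardDensity hw_comp hw_supp).contDiff_convolution_left
    (ContinuousLinearMap.mul ℝ ℝ) (contDiff_pushforwardDensity hρ hderiv hw hw_comp hw_supp) hG

end ConvolutionAlongCoordinate

theorem exists_mem_notMem_of_ae_restrict {α : Type*} {mα : MeasurableSpace α} {μ : Measure α}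
    {s t : Set α} (hs : MeasurableSet s) (hst : μ (s ∩ t) < μ s) {p : α → Prop}
    (hp : ∀ᵐ x ∂μ.restrict s, p x) : ∃ x ∈ s, x ∉ t ∧ p x := by
  by_contra! hcontra
  rw [ae_restrict_iff' hs, ae_iff] at hp
  have hdiff : s \ t ⊆ {x | ¬ (x ∈ s → p x)} := fun x hx h => hcontra x hx.1 hx.2 (h hx.1)
  refine hst.not_ge ?_
  simpa [measure_mono_null hdiff hp] using measure_le_inter_add_sdiff μ s t

theorem exists_natCast_tail_lt {ι : Type*} [Fintype ι] {h : ℝ → ℝ} {G : ι → ℝ → ℝ} {J : Set ℝ}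
    {S : ι → Set ℝ} (hh : Measurable h) (hG : ∀ i, Measurable (G i)) (hJ_pos : volume J ≠ 0)
    (hJ_fin : volume J ≠ ⊤) (hS : ∀ i, volume (S i) ≠ ⊤) (K : NNReal) :
    ∃ N : ℕ, volume.restrict J {y | N < |h y|} +
      ∑ i, K * volume.restrict (S i) {t | N < |G i t|} < volume J := by
  have : IsFiniteMeasure (volume.restrict J) := isFiniteMeasure_restrict.2 hJ_fin
  have (i : ι) : IsFiniteMeasure (volume.restrict (S i)) := isFiniteMeasure_restrict.2 (hS i)
  have hG_tail (i : ι) :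
      Tendsto (fun N : ℕ => K * volume.restrict (S i) {t | N < |G i t|}) atTop (𝓝 0) := by
    simpa using ENNReal.Tendsto.const_mul (tendsto_measure_natCast_lt_abs_atTop _ (hG i))
      (Or.inr ENNReal.coe_ne_top)
  have htail := (tendsto_measure_natCast_lt_abs_atTop (volume.restrict J) hh).add
    (tendsto_finsetSum Finset.univ fun i _ => hG_tail i)
  rw [Finset.sum_const_zero, add_zero] at htail
  exact (htail.eventually_lt_const (pos_iff_ne_zero.2 hJ_pos)).exists

theorem exists_forall_abs_le_of_ae_eq_add_sum {ι : Type*} [Fintype ι] {h : ℝ → ℝ}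
    {G : ι → ℝ → ℝ} {J : Set ℝ} {S : ι → Set ℝ} (hh : Measurable h) (hG : ∀ i, Measurable (G i))
    (hJ : MeasurableSet J) (hJ_pos : volume J ≠ 0) (hJ_fin : volume J ≠ ⊤)
    (hS : ∀ i, volume (S i) ≠ ⊤) (K : NNReal) :
    ∃ M : ℝ, ∀ f : ι → ℝ → ℝ, (∀ i, AntilipschitzWith K (J.domRestrict (f i))) →
      (∀ i, MapsTo (f i) J (S i)) → ∀ c : ℝ,
      (∀ᵐ y ∂volume.restrict J, c = h y + ∑ i, G i (f i y)) → |c| ≤ M := by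
  obtain ⟨N, hN⟩ := exists_natCast_tail_lt hh hG hJ_pos hJ_fin hS K
  refine ⟨N + ∑ _i : ι, (N : ℝ), fun f hf hfS c hc => ?_⟩
  set bad : Set ℝ := {y | N < |h y|} ∪ ⋃ i, f i ⁻¹' ({t | N < |G i t|} ∩ S i)
  have hbad : volume (J ∩ bad) < volume J := by
    refine lt_of_le_of_lt ?_ hN
    rw [inter_union_distrib_left, inter_iUnion]
    refine (measure_union_le _ _).trans (add_le_add ?_ ?_)
    · rw [inter_comm, Measure.restrict_apply (measurableSet_lt measurable_const hh.abs)]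
    · refine (measure_iUnion_fintype_le _ _).trans (Finset.sum_le_sum fun i _ => ?_)
      rw [Measure.restrict_apply (measurableSet_lt measurable_const (hG i).abs)]
      exact volume_inter_preimage_le_of_antilipschitzWith (hf i) _
  obtain ⟨y, hyJ, hy_bad, hy⟩ := exists_mem_notMem_of_ae_restrict hJ hbad hc
  simp only [bad, mem_union, mem_iUnion, not_or, not_exists, mem_preimage, mem_inter_iff, not_and,
    mem_ofPred_eq, not_lt] at hy_bad
  rw [hy]
  have hG_le (i : ι) : |G i (f i y)| ≤ N :=
    not_lt.1 fun hlt => hy_bad.2 i hlt (hfS i hyJ)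
  calc |h y + ∑ i, G i (f i y)| ≤ |h y| + ∑ i, |G i (f i y)| :=
        (abs_add_le _ _).trans (add_le_add_right (Finset.abs_sum_le_sum_abs _ _) _)
    _ ≤ N + ∑ _i : ι, (N : ℝ) := add_le_add hy_bad.1 (Finset.sum_le_sum fun i _ => hG_le i)

theorem exists_contDiff_tsupport_subset_integral_eq_one {U : Set ℝ} (hU : IsOpen U)
    (hU_ne : U.Nonempty) : ∃ w : ℝ → ℝ, ContDiff ℝ ∞ w ∧ HasCompactSupport w ∧ tsupport w ⊆ U ∧
      ∫ y, w y = 1 := by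
  obtain ⟨y, hy⟩ := hU_ne
  obtain ⟨r, hr, hrU⟩ := Metric.nhds_basis_closedBall.mem_iff.1 (hU.mem_nhds hy)
  let bump : ContDiffBump y := ⟨r / 2, r, half_pos hr, half_lt_self hr⟩
  exact ⟨bump.normed volume, bump.contDiff_normed, bump.hasCompactSupport_normed,
    bump.tsupport_normed_eq.trans_subset hrU, bump.integral_normed⟩

theorem exists_contDiff_forall_eq_of_ae_eq_add_sum {ι : Type*} [Fintype ι] {h : ℝ → ℝ}
    {G ρ : ι → ℝ → ℝ} {U : Set ℝ} (hU : IsOpen U) (hU_ne : U.Nonempty)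
    (hh : LocallyIntegrableOn h U) (hG : ∀ i, LocallyIntegrable (G i))
    (hρ : ∀ i, ContDiffOn ℝ ∞ (ρ i) U) (hρ_inj : ∀ i, InjOn (ρ i) U)
    (hρ_deriv : ∀ i, ∀ y ∈ U, deriv (ρ i) y ≠ 0) :
    ∃ Φ : (ι → ℝ) → ℝ, ContDiff ℝ ∞ Φ ∧ ∀ (u : ι → ℝ) (c : ℝ),
      (∀ᵐ y ∂volume.restrict U, c = h y + ∑ i, G i (u i - ρ i y)) → c = Φ u := by
  obtain ⟨w, hw, hw_comp, hw_supp, hw_one⟩ :=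
    exists_contDiff_tsupport_subset_integral_eq_one hU hU_ne
  have hG_int (i : ι) (u : ℝ) : Integrable fun y => w y * G i (u - ρ i y) :=
    integrable_mul_comp_sub hU (hρ i) (hρ_inj i) (hρ_deriv i) hw hw_comp hw_supp (hG i) u
  have hh_int : Integrable fun y => w y * h y := by
    have hK : IntegrableOn h (tsupport w) := hh.integrableOn_compact_subset hw_supp hw_comp
    rw [← integrableOn_iff_integrable_of_support_subset (s := tsupport w)
      ((support_mul_subset_left _ _).trans (subset_tsupport w))]
    exact hK.continuousOn_mul hw.continuous.continuousOn hw_comp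
  refine ⟨fun u => (∫ y, w y * h y) + ∑ i, ∫ y, w y * G i (u i - ρ i y), ?_, fun u c hc => ?_⟩
  · exact contDiff_const.add (ContDiff.sum fun i _ => (contDiff_integral_mul_comp_sub hU (hρ i)
      (hρ_inj i) (hρ_deriv i) hw hw_comp hw_supp (hG i)).comp (contDiff_apply ℝ ℝ i))
  · rw [ae_restrict_iff' hU.measurableSet] at hc
    calc c = ∫ y, w y * c := by rw [integral_mul_const, hw_one, one_mul]
      _ = ∫ y, (w y * h y + ∑ i, w y * G i (u i - ρ i y)) := by
        refine integral_congr_ae ?_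
        filter_upwards [hc] with y hy
        by_cases hyU : y ∈ U
        · rw [← Finset.mul_sum, ← mul_add, ← hy hyU]
        · simp [image_eq_zero_of_notMem_tsupport fun hy => hyU (hw_supp hy)]
      _ = _ := by
        rw [integral_add hh_int (integrable_finsetSum _ fun i _ => hG_int i (u i)),
          integral_finsetSum _ fun i _ => hG_int i (u i)]

/-- A smooth coordinate on the unit interval whose derivative is at least `1`. Its differences
`ρ x - ρ y` play the role of logarithms of the arguments of a functional relation. -/
structure IsExpandingCoordinate (ρ : ℝ → ℝ) : Prop where
  contDiffOn : ContDiffOn ℝ ∞ ρ (Ioo 0 1)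
  one_le_deriv : ∀ x ∈ Ioo (0 : ℝ) 1, 1 ≤ deriv ρ x

namespace IsExpandingCoordinate

variable {ρ σ : ℝ → ℝ}

theorem differentiableOn (hρ : IsExpandingCoordinate ρ) : DifferentiableOn ℝ ρ (Ioo 0 1) :=
  hρ.contDiffOn.differentiableOn (by simp)

theorem add (hρ : IsExpandingCoordinate ρ) (hσ : IsExpandingCoordinate σ) :
    IsExpandingCoordinate (ρ + σ) where
  contDiffOn := hρ.contDiffOn.add hσ.contDiffOn
  one_le_deriv x hx := by
    have hnhds := isOpen_Ioo.mem_nhds hx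
    rw [deriv_add (hρ.differentiableOn.differentiableAt hnhds)
      (hσ.differentiableOn.differentiableAt hnhds)]
    linarith [hρ.one_le_deriv x hx, hσ.one_le_deriv x hx]

theorem sub_le_sub (hρ : IsExpandingCoordinate ρ) {x y : ℝ} (hx : x ∈ Ioo (0 : ℝ) 1)
    (hy : y ∈ Ioo (0 : ℝ) 1) (hxy : x ≤ y) : y - x ≤ ρ y - ρ x := by
  have hderiv : ∀ z ∈ interior (Ioo (0 : ℝ) 1), 1 ≤ deriv ρ z := by
    simpa only [interior_Ioo] using hρ.one_le_deriv
  simpa using (convex_Ioo 0 1).mul_sub_le_image_sub_of_le_deriv hρ.differentiableOn.continuousOn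
    (hρ.differentiableOn.mono interior_subset) hderiv x hx y hy hxy

theorem strictMonoOn (hρ : IsExpandingCoordinate ρ) : StrictMonoOn ρ (Ioo 0 1) :=
  fun _ hx _ hy hxy => sub_pos.1 ((sub_pos.2 hxy).trans_le (hρ.sub_le_sub hx hy hxy.le))

theorem antilipschitzWith_const_sub (hρ : IsExpandingCoordinate ρ) {S : Set ℝ}
    (hS : S ⊆ Ioo 0 1) (u : ℝ) : AntilipschitzWith 1 (S.domRestrict fun y => u - ρ y) := by
  refine AntilipschitzWith.of_le_mul_dist fun x y => ?_
  simp only [domRestrict_apply, dist_sub_left, Subtype.dist_eq, NNReal.coe_one, one_mul,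
    Real.dist_eq]
  rcases le_total (x : ℝ) y with hxy | hxy
  · rw [abs_sub_comm, abs_of_nonneg (sub_nonneg.2 hxy), abs_sub_comm]
    exact (hρ.sub_le_sub (hS x.2) (hS y.2) hxy).trans (le_abs_self _)
  · rw [abs_of_nonneg (sub_nonneg.2 hxy)]
    exact (hρ.sub_le_sub (hS y.2) (hS x.2) hxy).trans (le_abs_self _)

theorem exp_sub_mem_Ioo (hρ : IsExpandingCoordinate ρ) {x y : ℝ} (hxy : (x, y) ∈ P2) :
    Real.exp (ρ x - ρ y) ∈ Ioo (0 : ℝ) 1 := by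
  have hlt := hρ.strictMonoOn ⟨hxy.1, hxy.2.1.trans hxy.2.2⟩ ⟨hxy.1.trans hxy.2.1, hxy.2.2⟩ hxy.2.1
  exact ⟨Real.exp_pos _, Real.exp_lt_one_iff.2 (sub_neg.2 hlt)⟩

theorem sub_mem_Icc (hρ : IsExpandingCoordinate ρ) {a b c d x y : ℝ} (ha : 0 < a) (hd : d < 1)
    (hbc : b < c) (hx : x ∈ Icc a b) (hy : y ∈ Icc c d) :
    ρ x - ρ y ∈ Icc (ρ a - ρ d) (ρ b - ρ c) := by
  have hmono := hρ.strictMonoOn.monotoneOn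
  have hmem {z : ℝ} (haz : a ≤ z) (hzd : z ≤ d) : z ∈ Ioo (0 : ℝ) 1 := ⟨by linarith, by linarith⟩
  obtain ⟨hax, hxb⟩ := hx
  obtain ⟨hcy, hyd⟩ := hy
  constructor
  · linarith [hmono (hmem le_rfl (by linarith)) (hmem hax (by linarith)) hax,
      hmono (hmem (by linarith) hyd) (hmem (by linarith) le_rfl) hyd]
  · linarith [hmono (hmem hax (by linarith)) (hmem (by linarith) (by linarith)) hxb,
      hmono (hmem (by linarith) (by linarith)) (hmem (by linarith) hyd) hcy]

end IsExpandingCoordinate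

theorem isExpandingCoordinate_log : IsExpandingCoordinate Real.log where
  contDiffOn := Real.contDiffOn_log.mono fun _ hx => hx.1.ne'
  one_le_deriv x hx := by rw [Real.deriv_log]; exact (one_le_inv₀ hx.1).2 hx.2.le

theorem isExpandingCoordinate_neg_log_one_sub :
    IsExpandingCoordinate fun x => -Real.log (1 - x) where
  contDiffOn := (ContDiffOn.log (by fun_prop) fun x hx => (sub_pos.2 hx.2).ne').neg
  one_le_deriv x hx := by
    have hderiv := (((hasDerivAt_id' x).const_sub 1).log (sub_pos.2 hx.2).ne').fun_neg
    rw [hderiv.deriv, ← neg_div, neg_neg, one_le_div (sub_pos.2 hx.2)]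
    linarith [hx.1]

/-- The relation `F x = F y + ∑ i, ε i * F (exp (ρ i x - ρ i y))` for almost every `x` and, given
`x`, almost every `y` such that `0 < x < y < 1`. The five-term relation of the dilogarithm has this
shape for the coordinates `log x`, `-log (1 - x)` and their sum. -/
def SolvesLogRelationAE {ι : Type*} [Fintype ι] (ρ : ι → ℝ → ℝ) (ε : ι → ℝ) (F : ℝ → ℝ) : Prop :=
  ∀ᵐ x, ∀ᵐ y, (x, y) ∈ P2 → F x = F y + ∑ i, ε i * F (Real.exp (ρ i x - ρ i y))

theorem isOpen_P2 : IsOpen P2 :=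
  (isOpen_lt continuous_const continuous_fst).inter
    ((isOpen_lt continuous_fst continuous_snd).inter (isOpen_lt continuous_snd continuous_const))

section Regularity

variable {ι : Type*} [Fintype ι] {ρ : ι → ℝ → ℝ} {ε : ι → ℝ} {F G : ℝ → ℝ}

theorem SolvesLogRelationAE.congr (hρ : ∀ i, IsExpandingCoordinate (ρ i))
    (hF : SolvesLogRelationAE ρ ε F) (hFG : F =ᵐ[volume.restrict (Ioo 0 1)] G) :
    SolvesLogRelationAE ρ ε G := by
  have hexp := ae_comp_exp_of_ae_restrict measurableSet_Ioo hFG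
  rw [EventuallyEq, ae_restrict_iff' measurableSet_Ioo] at hFG
  filter_upwards [hF, hFG] with x hx hFGx
  have hterms : ∀ᵐ y, ∀ i, y ∈ Ioo (0 : ℝ) 1 → Real.exp (ρ i x - ρ i y) ∈ Ioo (0 : ℝ) 1 →
      F (Real.exp (ρ i x - ρ i y)) = G (Real.exp (ρ i x - ρ i y)) :=
    ae_all_iff.2 fun i => (ae_restrict_iff' measurableSet_Ioo).1 <|
      ae_restrict_comp_of_antilipschitzWith measurableSet_Ioo
        ((hρ i).antilipschitzWith_const_sub Subset.rfl (ρ i x)) hexp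
  filter_upwards [hx, hFG, hterms] with y hy hFGy hFG_terms hxy
  have hy01 : y ∈ Ioo (0 : ℝ) 1 := ⟨hxy.1.trans hxy.2.1, hxy.2.2⟩
  rw [← hFGx ⟨hxy.1, hxy.2.1.trans hxy.2.2⟩, ← hFGy hy01, hy hxy]
  simp only [fun i => hFG_terms i hy01 ((hρ i).exp_sub_mem_Ioo hxy)]

theorem SolvesLogRelationAE.ae_restrict_Icc (hF : SolvesLogRelationAE ρ ε F) {a b c d : ℝ}
    (ha : 0 < a) (hbc : b < c) (hd : d < 1) :
    ∀ᵐ x ∂volume.restrict (Icc a b), ∀ᵐ y ∂volume.restrict (Icc c d),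
      F x = F y + ∑ i, ε i * F (Real.exp (ρ i x - ρ i y)) := by
  filter_upwards [ae_restrict_of_ae hF, ae_restrict_mem measurableSet_Icc] with x hx hxab
  filter_upwards [ae_restrict_of_ae hx, ae_restrict_mem measurableSet_Icc] with y hy hycd
  exact hy ⟨ha.trans_le hxab.1, hxab.2.trans_lt (hbc.trans_le hycd.1), hycd.2.trans_lt hd⟩

theorem SolvesLogRelationAE.exists_ae_abs_le (hρ : ∀ i, IsExpandingCoordinate (ρ i))
    (hF : SolvesLogRelationAE ρ ε F) (hF_meas : Measurable F) {a b : ℝ} (ha : 0 < a) (hab : a ≤ b)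
    (hb : b < 1) : ∃ M, ∀ᵐ x ∂volume.restrict (Icc a b), |F x| ≤ M := by
  obtain ⟨c, hbc, hc⟩ := exists_between hb
  obtain ⟨d, hcd, hd⟩ := exists_between hc
  obtain ⟨M, hM⟩ := exists_forall_abs_le_of_ae_eq_add_sum hF_meas
    (G := fun i t => ε i * F (Real.exp t)) (J := Icc c d)
    (S := fun i => Icc (ρ i a - ρ i d) (ρ i b - ρ i c))
    (fun i => (hF_meas.comp Real.measurable_exp).const_mul (ε i)) measurableSet_Icc
    (by simpa using hcd) (by simp) (by simp) 1
  refine ⟨M, ?_⟩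
  filter_upwards [hF.ae_restrict_Icc ha hbc hd, ae_restrict_mem measurableSet_Icc] with x hx hxab
  have hJ : Icc c d ⊆ Ioo 0 1 := Icc_subset_Ioo (by linarith) hd
  exact hM (fun i y => ρ i x - ρ i y) (fun i => (hρ i).antilipschitzWith_const_sub hJ (ρ i x))
    (fun i y hy => (hρ i).sub_mem_Icc ha hd hbc hxab hy) (F x) hx

theorem SolvesLogRelationAE.integrableOn (hρ : ∀ i, IsExpandingCoordinate (ρ i))
    (hF : SolvesLogRelationAE ρ ε F) (hF_meas : Measurable F) {a b : ℝ} (ha : 0 < a) (hab : a ≤ b)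
    (hb : b < 1) : IntegrableOn F (Icc a b) := by
  obtain ⟨M, hM⟩ := hF.exists_ae_abs_le hρ hF_meas ha hab hb
  exact Measure.integrableOn_of_bounded (by simp) hF_meas.aestronglyMeasurable hM

theorem SolvesLogRelationAE.integrableOn_comp_exp (hρ : ∀ i, IsExpandingCoordinate (ρ i))
    (hF : SolvesLogRelationAE ρ ε F) (hF_meas : Measurable F) {s t : ℝ} (hst : s ≤ t)
    (ht : t < 0) : IntegrableOn (fun v => F (Real.exp v)) (Icc s t) := by
  obtain ⟨M, hM⟩ := hF.exists_ae_abs_le hρ hF_meas (Real.exp_pos s) (Real.exp_le_exp.2 hst)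
    (Real.exp_lt_one_iff.2 ht)
  refine Measure.integrableOn_of_bounded (M := M) (by simp)
    (hF_meas.comp Real.measurable_exp).aestronglyMeasurable ?_
  filter_upwards [ae_restrict_of_ae (ae_comp_exp_of_ae_restrict measurableSet_Icc hM),
    ae_restrict_mem measurableSet_Icc] with v hv hv_mem
  exact hv ⟨Real.exp_le_exp.2 hv_mem.1, Real.exp_le_exp.2 hv_mem.2⟩

theorem SolvesLogRelationAE.integrable_indicator_comp_exp (hρ : ∀ i, IsExpandingCoordinate (ρ i))
    (hF : SolvesLogRelationAE ρ ε F) (hF_meas : Measurable F) (i : ι) {a b c d : ℝ} (ha : 0 < a)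
    (hab : a ≤ b) (hbc : b < c) (hcd : c ≤ d) (hd : d < 1) :
    Integrable ((Icc (ρ i a - ρ i d) (ρ i b - ρ i c)).indicator
      fun v => ε i * F (Real.exp v)) := by
  have hmem := (hρ i).sub_mem_Icc ha hd hbc (left_mem_Icc.2 hab) (right_mem_Icc.2 hcd)
  have hneg : ρ i b - ρ i c < 0 := sub_neg.2 <|
    (hρ i).strictMonoOn ⟨by linarith, by linarith⟩ ⟨by linarith, by linarith⟩ hbc
  rw [integrable_indicator_iff measurableSet_Icc]
  exact (hF.integrableOn_comp_exp hρ hF_meas (hmem.1.trans hmem.2) hneg).const_mul (ε i)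

theorem SolvesLogRelationAE.exists_contDiffOn_ae_eq_Ioo (hρ : ∀ i, IsExpandingCoordinate (ρ i))
    (hF : SolvesLogRelationAE ρ ε F) (hF_meas : Measurable F) {a b : ℝ} (ha : 0 < a) (hab : a ≤ b)
    (hb : b < 1) : ∃ g, ContDiffOn ℝ ∞ g (Ioo a b) ∧ F =ᵐ[volume.restrict (Ioo a b)] g := by
  obtain ⟨c, hbc, hc⟩ := exists_between hb
  obtain ⟨d, hcd, hd⟩ := exists_between hc
  have hJ : Ioo c d ⊆ Ioo 0 1 := Ioo_subset_Ioo (by linarith) hd.le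
  set G : ι → ℝ → ℝ := fun i => (Icc (ρ i a - ρ i d) (ρ i b - ρ i c)).indicator
    fun v => ε i * F (Real.exp v)
  have hG (i : ι) : LocallyIntegrable (G i) :=
    (hF.integrable_indicator_comp_exp hρ hF_meas i ha hab hbc hcd.le hd).locallyIntegrable
  obtain ⟨Φ, hΦ, hΦ_eq⟩ := exists_contDiff_forall_eq_of_ae_eq_add_sum isOpen_Ioo
    (nonempty_Ioo.2 hcd) ((hF.integrableOn hρ hF_meas (by linarith) hcd.le hd).mono_set
      Ioo_subset_Icc_self).locallyIntegrableOn hG (fun i => (hρ i).contDiffOn.mono hJ)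
    (fun i => (hρ i).strictMonoOn.injOn.mono hJ)
    (fun i y hy => (zero_lt_one.trans_le ((hρ i).one_le_deriv y (hJ hy))).ne')
  refine ⟨fun x => Φ fun i => ρ i x, hΦ.comp_contDiffOn <| contDiffOn_pi.2 fun i =>
    (hρ i).contDiffOn.mono (Ioo_subset_Ioo ha.le hb.le), ?_⟩
  filter_upwards [ae_restrict_of_ae_restrict_of_subset Ioo_subset_Icc_self
    (hF.ae_restrict_Icc ha hbc hd), ae_restrict_mem measurableSet_Ioo] with x hx hxab
  refine hΦ_eq _ _ ?_
  filter_upwards [ae_restrict_of_ae_restrict_of_subset Ioo_subset_Icc_self hx,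
    ae_restrict_mem measurableSet_Ioo] with y hy hycd
  have hG_eq (i : ι) : G i (ρ i x - ρ i y) = ε i * F (Real.exp (ρ i x - ρ i y)) :=
    indicator_of_mem ((hρ i).sub_mem_Icc ha hd hbc (Ioo_subset_Icc_self hxab)
      (Ioo_subset_Icc_self hycd)) _
  simpa only [hG_eq] using hy

theorem SolvesLogRelationAE.exists_contDiffOn_ae_eq (hρ : ∀ i, IsExpandingCoordinate (ρ i))
    (hF : SolvesLogRelationAE ρ ε F) (hF_meas : AEMeasurable F (volume.restrict (Ioo 0 1))) :
    ∃ g, ContDiffOn ℝ ∞ g (Ioo 0 1) ∧ F =ᵐ[volume.restrict (Ioo 0 1)] g := by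
  have hmk := hF.congr hρ hF_meas.ae_eq_mk
  suffices hsmooth : ∃ g, ContDiffOn ℝ ∞ g (Ioo 0 1) ∧
      hF_meas.mk F =ᵐ[volume.restrict (Ioo 0 1)] g by
    obtain ⟨g, hg, hmkg⟩ := hsmooth
    exact ⟨g, hg, hF_meas.ae_eq_mk.trans hmkg⟩
  refine exists_contDiffOn_ae_eq_of_locally measurableSet_Ioo fun x hx => ?_
  obtain ⟨a, ha, hax⟩ := exists_between hx.1
  obtain ⟨b, hxb, hb⟩ := exists_between hx.2
  exact ⟨Ioo a b, isOpen_Ioo, ⟨hax, hxb⟩,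
    hmk.exists_contDiffOn_ae_eq_Ioo hρ hF_meas.measurable_mk ha (hax.trans hxb).le hb⟩

theorem SolvesLogRelationAE.eq_add_sum_of_continuousOn
    (hρ : ∀ i, IsExpandingCoordinate (ρ i)) (hF : SolvesLogRelationAE ρ ε F)
    (hF_cont : ContinuousOn F (Ioo 0 1)) {x y : ℝ} (hxy : (x, y) ∈ P2) :
    F x = F y + ∑ i, ε i * F (Real.exp (ρ i x - ρ i y)) := by
  have hfst : MapsTo Prod.fst P2 (Ioo (0 : ℝ) 1) := fun _ hp => ⟨hp.1, hp.2.1.trans hp.2.2⟩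
  have hsnd : MapsTo Prod.snd P2 (Ioo (0 : ℝ) 1) := fun _ hp => ⟨hp.1.trans hp.2.1, hp.2.2⟩
  have hterm (i : ι) : ContinuousOn (fun p : ℝ × ℝ => F (Real.exp (ρ i p.1 - ρ i p.2))) P2 := by
    have hρ_cont := (hρ i).contDiffOn.continuousOn
    exact hF_cont.comp ((hρ_cont.comp continuousOn_fst hfst).sub
      (hρ_cont.comp continuousOn_snd hsnd)).rexp fun p hp => (hρ i).exp_sub_mem_Ioo hp
  exact eqOn_of_ae_ae_eq isOpen_P2 (f := fun p => F p.1)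
    (g := fun p => F p.2 + ∑ i, ε i * F (Real.exp (ρ i p.1 - ρ i p.2)))
    (hF_cont.comp continuousOn_fst hfst) ((hF_cont.comp continuousOn_snd hsnd).add
      (continuousOn_finsetSum _ fun i _ => (hterm i).const_mul (ε i))) hF hxy

end Regularity

/-- The fundamental equation of information on the open triangle `x, y > 0`, `x + y < 1`, together
with the symmetry `φ (1 - x) = φ x`: the chain rule and symmetry of the binary entropy. -/
structure SolvesInformationEquation (φ : ℝ → ℝ) : Prop where
  one_sub : ∀ x ∈ Ioo (0 : ℝ) 1, φ (1 - x) = φ x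
  chain : ∀ x y : ℝ, 0 < x → 0 < y → x + y < 1 →
    φ x + (1 - x) * φ (y / (1 - x)) = φ y + (1 - y) * φ (x / (1 - y))

theorem div_one_sub_mem_Ioo {x y : ℝ} (hy : 0 < y) (hxy : x + y < 1) :
    y / (1 - x) ∈ Ioo (0 : ℝ) 1 := by
  have hx : 0 < 1 - x := by linarith
  exact ⟨div_pos hy hx, (div_lt_one hx).2 (by linarith)⟩

theorem exists_div_one_sub_eq {r s : ℝ} (hr : r ∈ Ioo (0 : ℝ) 1) (hs : s ∈ Ioo (0 : ℝ) 1) :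
    ∃ x y : ℝ, 0 < x ∧ 0 < y ∧ x + y < 1 ∧ y / (1 - x) = r ∧ x / (1 - y) = s := by
  have hr' : 0 < 1 - r := sub_pos.2 hr.2
  have hs' : 0 < 1 - s := sub_pos.2 hs.2
  have hrs : 0 < 1 - r * s := sub_pos.2 (mul_lt_one_of_nonneg_of_lt_one_left hr.1.le hr.2 hs.2.le)
  have hsr : 1 - s * r ≠ 0 := mul_comm r s ▸ hrs.ne'
  refine ⟨s * (1 - r) / (1 - r * s), r * (1 - s) / (1 - r * s), div_pos (mul_pos hs.1 hr') hrs,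
    div_pos (mul_pos hr.1 hs') hrs, ?_, ?_, ?_⟩
  · rw [← add_div, div_lt_one hrs]
    linarith [mul_pos hr' hs']
  · have hx : 1 - s * (1 - r) / (1 - r * s) = (1 - s) / (1 - r * s) := by field_simp; ring
    rw [hx, div_div_div_cancel_right₀ hrs.ne', mul_div_cancel_right₀ r hs'.ne']
  · have hy : 1 - r * (1 - s) / (1 - r * s) = (1 - r) / (1 - r * s) := by field_simp; ring
    rw [hy, div_div_div_cancel_right₀ hrs.ne', mul_div_cancel_right₀ s hr'.ne']

theorem binEntropy_add_one_sub_mul_binEntropy_div {x y : ℝ} (hx : x < 1) :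
    Real.binEntropy x + (1 - x) * Real.binEntropy (y / (1 - x)) =
      Real.negMulLog x + Real.negMulLog y + Real.negMulLog (1 - x - y) := by
  have hx' : 1 - x ≠ 0 := (sub_pos.2 hx).ne'
  set r : ℝ := y / (1 - x)
  have hy : y = (1 - x) * r := (mul_div_cancel₀ y hx').symm
  have hz : 1 - x - y = (1 - x) * (1 - r) := by rw [hy]; ring
  rw [hz, hy, Real.negMulLog_mul, Real.negMulLog_mul,
    Real.binEntropy_eq_negMulLog_add_negMulLog_one_sub,
    Real.binEntropy_eq_negMulLog_add_negMulLog_one_sub]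
  ring

theorem solvesInformationEquation_binEntropy : SolvesInformationEquation Real.binEntropy where
  one_sub x _ := Real.binEntropy_one_sub x
  chain x y _ _ hxy := by
    rw [binEntropy_add_one_sub_mul_binEntropy_div (by linarith),
      binEntropy_add_one_sub_mul_binEntropy_div (by linarith), sub_right_comm 1 x y]
    ring

theorem hasDerivAt_deriv_binEntropy {x : ℝ} (hx : x ∈ Ioo (0 : ℝ) 1) :
    HasDerivAt (deriv Real.binEntropy) (-(x * (1 - x))⁻¹) x := by
  have hx' : 1 - x ≠ 0 := (sub_pos.2 hx.2).ne'
  have hlog : HasDerivAt (fun x => Real.log (1 - x) - Real.log x) (-1 / (1 - x) - x⁻¹) x :=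
    (((hasDerivAt_id' x).const_sub 1).log hx').sub (Real.hasDerivAt_log hx.1.ne')
  rw [funext Real.deriv_binEntropy]
  convert hlog using 1
  have := hx.1.ne'
  field_simp
  ring

namespace SolvesInformationEquation

variable {φ ψ : ℝ → ℝ}

theorem sub_const_mul (hφ : SolvesInformationEquation φ) (hψ : SolvesInformationEquation ψ)
    (k : ℝ) : SolvesInformationEquation fun x => φ x - k * ψ x where
  one_sub x hx := by rw [hφ.one_sub x hx, hψ.one_sub x hx]
  chain x y hx hy hxy := by linear_combination hφ.chain x y hx hy hxy - k * hψ.chain x y hx hy hxy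

theorem eq_zero_of_eqOn_const (hφ : SolvesInformationEquation φ) {c : ℝ}
    (hc : ∀ x ∈ Ioo (0 : ℝ) 1, φ x = c) : c = 0 := by
  have h := hφ.chain (1 / 2) (1 / 4) (by norm_num) (by norm_num) (by norm_num)
  rw [hc _ (by norm_num), hc _ (by norm_num), hc _ (by norm_num), hc _ (by norm_num)] at h
  linarith

theorem deriv_chain (hφ : SolvesInformationEquation φ) (hdiff : DifferentiableOn ℝ φ (Ioo 0 1))
    {x y : ℝ} (hx : 0 < x) (hy : 0 < y) (hxy : x + y < 1) :
    deriv φ (y / (1 - x)) =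
      deriv φ y - φ (x / (1 - y)) + x / (1 - y) * deriv φ (x / (1 - y)) := by
  have hx' : 1 - x ≠ 0 := by linarith
  have hy' : 1 - y ≠ 0 := by linarith
  have hφ' {z : ℝ} (hz : z ∈ Ioo (0 : ℝ) 1) : HasDerivAt φ (deriv φ z) z :=
    (hdiff.differentiableAt (isOpen_Ioo.mem_nhds hz)).hasDerivAt
  have hleft := ((hφ' (div_one_sub_mem_Ioo hy hxy)).comp y
    ((hasDerivAt_id' y).div_const (1 - x))).const_mul (1 - x) |>.const_add (φ x)
  have hright := (hφ' ⟨hy, by linarith⟩).add (((hasDerivAt_id' y).const_sub 1).mul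
    ((hφ' (div_one_sub_mem_Ioo hx (add_comm x y ▸ hxy))).comp y
      ((hasDerivAt_const y x).fun_div ((hasDerivAt_id' y).const_sub 1) hy')))
  have hunique := hleft.unique <| hright.congr_of_eventuallyEq <|
    ((lt_mem_nhds hy).and (gt_mem_nhds (lt_sub_iff_add_lt'.2 hxy))).mono fun z hz =>
      hφ.chain x z hx hz.1 (lt_sub_iff_add_lt'.1 hz.2)
  simp only [comp_apply] at hunique
  field_simp at hunique ⊢
  linear_combination hunique

theorem mul_deriv_deriv_chain (hφ : SolvesInformationEquation φ)
    (hdiff : DifferentiableOn ℝ φ (Ioo 0 1)) (hdiff' : DifferentiableOn ℝ (deriv φ) (Ioo 0 1))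
    {x y : ℝ} (hx : 0 < x) (hy : 0 < y) (hxy : x + y < 1) :
    y / (1 - x) * (1 - y / (1 - x)) * deriv (deriv φ) (y / (1 - x)) =
      x / (1 - y) * (1 - x / (1 - y)) * deriv (deriv φ) (x / (1 - y)) := by
  have hx' : 1 - x ≠ 0 := by linarith
  have hy' : 1 - y ≠ 0 := by linarith
  have hnhds {z : ℝ} (hz : z ∈ Ioo (0 : ℝ) 1) : Ioo 0 1 ∈ 𝓝 z := isOpen_Ioo.mem_nhds hz
  have hr := hnhds (div_one_sub_mem_Ioo hy hxy)
  have hs := hnhds (div_one_sub_mem_Ioo hx (add_comm x y ▸ hxy))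
  have hdiv := (hasDerivAt_id' x).div_const (1 - y)
  have hφs := (hdiff.differentiableAt hs).hasDerivAt.comp x hdiv
  have hφ's := (hdiff'.differentiableAt hs).hasDerivAt.comp x hdiv
  have hleft := (hdiff'.differentiableAt hr).hasDerivAt.comp x
    ((hasDerivAt_const x y).fun_div ((hasDerivAt_id' x).const_sub 1) hx')
  have hright := (hφs.const_sub (deriv φ y)).add (hdiv.mul hφ's)
  have hunique := hleft.unique <| hright.congr_of_eventuallyEq <|
    ((lt_mem_nhds hx).and (gt_mem_nhds (lt_sub_iff_add_lt.2 hxy))).mono fun z hz =>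
      hφ.deriv_chain hdiff hz.1 hy (lt_sub_iff_add_lt.1 hz.2)
  simp only [comp_apply] at hunique
  field_simp at hunique ⊢
  linear_combination (1 - x - y) * hunique

theorem mul_deriv_deriv_eq (hφ : SolvesInformationEquation φ)
    (hdiff : DifferentiableOn ℝ φ (Ioo 0 1)) (hdiff' : DifferentiableOn ℝ (deriv φ) (Ioo 0 1))
    {r s : ℝ} (hr : r ∈ Ioo (0 : ℝ) 1) (hs : s ∈ Ioo (0 : ℝ) 1) :
    r * (1 - r) * deriv (deriv φ) r = s * (1 - s) * deriv (deriv φ) s := by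
  obtain ⟨x, y, hx, hy, hxy, rfl, rfl⟩ := exists_div_one_sub_eq hr hs
  exact hφ.mul_deriv_deriv_chain hdiff hdiff' hx hy hxy

theorem eqOn_zero_of_deriv_deriv_eq_zero (hφ : SolvesInformationEquation φ)
    (hdiff : DifferentiableOn ℝ φ (Ioo 0 1)) (hdiff' : DifferentiableOn ℝ (deriv φ) (Ioo 0 1))
    (hzero : EqOn (deriv (deriv φ)) 0 (Ioo 0 1)) : EqOn φ 0 (Ioo 0 1) := by
  have hhalf : (1 / 2 : ℝ) ∈ Ioo (0 : ℝ) 1 := by norm_num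
  have hderiv_half : deriv φ (1 / 2) = 0 := by
    have hsymm : φ =ᶠ[𝓝 (1 / 2)] fun x => φ (1 - x) :=
      eventually_of_mem (isOpen_Ioo.mem_nhds hhalf) fun x hx => (hφ.one_sub x hx).symm
    have := hsymm.deriv_eq
    rw [deriv_comp_const_sub] at this
    norm_num at this
    linarith
  have hderiv : EqOn (deriv φ) 0 (Ioo 0 1) := fun x hx =>
    (isOpen_Ioo.is_const_of_deriv_eq_zero isPreconnected_Ioo hdiff' hzero hx hhalf).trans
      hderiv_half
  have hconst (x : ℝ) (hx : x ∈ Ioo (0 : ℝ) 1) : φ x = φ (1 / 2) :=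
    isOpen_Ioo.is_const_of_deriv_eq_zero isPreconnected_Ioo hdiff hderiv hx hhalf
  exact fun x hx => (hconst x hx).trans (hφ.eq_zero_of_eqOn_const hconst)

theorem exists_eqOn_const_mul_binEntropy (hφ : SolvesInformationEquation φ)
    (hsmooth : ContDiffOn ℝ 2 φ (Ioo 0 1)) :
    ∃ k, EqOn φ (fun x => k * Real.binEntropy x) (Ioo 0 1) := by
  have hdiff : DifferentiableOn ℝ φ (Ioo 0 1) := hsmooth.differentiableOn (by simp)
  have hdiff' : DifferentiableOn ℝ (deriv φ) (Ioo 0 1) :=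
    (hsmooth.deriv_of_isOpen (m := 1) isOpen_Ioo (by norm_num)).differentiableOn (by simp)
  have hhalf : (1 / 2 : ℝ) ∈ Ioo (0 : ℝ) 1 := by norm_num
  obtain ⟨k, hk⟩ : ∃ k : ℝ, ∀ x ∈ Ioo (0 : ℝ) 1, x * (1 - x) * deriv (deriv φ) x = -k :=
    ⟨-(1 / 2 * (1 - 1 / 2) * deriv (deriv φ) (1 / 2)), fun x hx => by
      rw [neg_neg, hφ.mul_deriv_deriv_eq hdiff hdiff' hx hhalf]⟩
  have hderiv (x : ℝ) (hx : x ∈ Ioo (0 : ℝ) 1) :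
      HasDerivAt (fun x => φ x - k * Real.binEntropy x)
        (deriv φ x - k * deriv Real.binEntropy x) x :=
    (hdiff.differentiableAt (isOpen_Ioo.mem_nhds hx)).hasDerivAt.sub
      ((Real.differentiableAt_binEntropy hx.1.ne' hx.2.ne).hasDerivAt.const_mul k)
  have hderiv' (x : ℝ) (hx : x ∈ Ioo (0 : ℝ) 1) :
      HasDerivAt (deriv fun x => φ x - k * Real.binEntropy x) 0 x := by
    have h := ((hdiff'.differentiableAt (isOpen_Ioo.mem_nhds hx)).hasDerivAt.sub
      ((hasDerivAt_deriv_binEntropy hx).const_mul k)).congr_of_eventuallyEq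
      (eventually_of_mem (isOpen_Ioo.mem_nhds hx) fun z hz => (hderiv z hz).deriv)
    have hx0 := hx.1.ne'
    have hx1 := (sub_pos.2 hx.2).ne'
    have hval : deriv (deriv φ) x - k * -(x * (1 - x))⁻¹ = 0 := by
      field_simp
      linear_combination hk x hx
    exact hval ▸ h
  have hzero := (hφ.sub_const_mul solvesInformationEquation_binEntropy k)
    |>.eqOn_zero_of_deriv_deriv_eq_zero
      (fun x hx => (hderiv x hx).differentiableAt.differentiableWithinAt)
      (fun x hx => (hderiv' x hx).differentiableAt.differentiableWithinAt)
      fun x hx => (hderiv' x hx).deriv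
  exact ⟨k, fun x hx => sub_eq_zero.1 (hzero hx)⟩

end SolvesInformationEquation

/-- The homogeneous Spence–Abel system at every point, written symmetrically on the triangle
`x, y > 0`, `x + y < 1` by replacing `y` with `1 - y` in the parameters of `P2`. -/
structure SolvesFiveTerm (F : ℝ → ℝ) : Prop where
  one_sub : ∀ x ∈ Ioo (0 : ℝ) 1, F (1 - x) = -F x
  five_term : ∀ x y : ℝ, 0 < x → 0 < y → x + y < 1 →
    F x + F y = F (x / (1 - y)) + F (y / (1 - x)) - F (x * y / ((1 - x) * (1 - y)))

theorem mul_div_one_sub_mul_one_sub_mem_Ioo {x y : ℝ} (hx : 0 < x) (hy : 0 < y)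
    (hxy : x + y < 1) : x * y / ((1 - x) * (1 - y)) ∈ Ioo (0 : ℝ) 1 := by
  have hden : 0 < (1 - x) * (1 - y) := mul_pos (by linarith) (by linarith)
  exact ⟨div_pos (mul_pos hx hy) hden, (div_lt_one hden).2 (by linarith)⟩

namespace SolvesFiveTerm

variable {F : ℝ → ℝ}

theorem deriv_one_sub (hF : SolvesFiveTerm F) {x : ℝ} (hx : x ∈ Ioo (0 : ℝ) 1) :
    deriv F (1 - x) = deriv F x := by
  have hrefl : (fun z => F (1 - z)) =ᶠ[𝓝 x] fun z => -F z :=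
    eventually_of_mem (isOpen_Ioo.mem_nhds hx) hF.one_sub
  have hderiv := hrefl.deriv_eq
  rw [deriv_comp_const_sub, deriv.fun_neg] at hderiv
  exact neg_injective hderiv

theorem mul_deriv_five_term (hF : SolvesFiveTerm F) (hdiff : DifferentiableOn ℝ F (Ioo 0 1))
    {x y : ℝ} (hx : 0 < x) (hy : 0 < y) (hxy : x + y < 1) :
    (1 - x) * (1 - y) * ((1 - x) * deriv F x) =
      (1 - x) ^ 2 * deriv F (x / (1 - y)) + y * (1 - y) * deriv F (y / (1 - x)) -
        y * deriv F (x * y / ((1 - x) * (1 - y))) := by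
  have hx' : 1 - x ≠ 0 := by linarith
  have hy' : 1 - y ≠ 0 := by linarith
  have hF' {z : ℝ} (hz : z ∈ Ioo (0 : ℝ) 1) : HasDerivAt F (deriv F z) z :=
    (hdiff.differentiableAt (isOpen_Ioo.mem_nhds hz)).hasDerivAt
  have hleft := (hF' ⟨hx, by linarith⟩).add_const (F y)
  have hright := (((hF' (div_one_sub_mem_Ioo hx (add_comm x y ▸ hxy))).comp x
    ((hasDerivAt_id' x).div_const (1 - y))).add
    ((hF' (div_one_sub_mem_Ioo hy hxy)).comp x
      ((hasDerivAt_const x y).fun_div ((hasDerivAt_id' x).const_sub 1) hx'))).sub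
    ((hF' (mul_div_one_sub_mul_one_sub_mem_Ioo hx hy hxy)).comp x
      (((hasDerivAt_id' x).mul_const y).fun_div
        (((hasDerivAt_id' x).const_sub 1).mul_const (1 - y)) (mul_ne_zero hx' hy')))
  have hunique := hleft.unique <| hright.congr_of_eventuallyEq <|
    ((lt_mem_nhds hx).and (gt_mem_nhds (lt_sub_iff_add_lt.2 hxy))).mono fun z hz =>
      hF.five_term z y hz.1 hy (lt_sub_iff_add_lt.1 hz.2)
  field_simp at hunique
  rw [mul_comm (1 - y) (1 - x)] at hunique
  linear_combination hunique

theorem solvesInformationEquation (hF : SolvesFiveTerm F)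
    (hdiff : DifferentiableOn ℝ F (Ioo 0 1)) :
    SolvesInformationEquation fun x => x * (1 - x) * deriv F x where
  one_sub x hx := by rw [hF.deriv_one_sub hx]; ring
  chain x y hx hy hxy := by
    have hx' : 1 - x ≠ 0 := by linarith
    have hy' : 1 - y ≠ 0 := by linarith
    have hderiv_x := hF.mul_deriv_five_term hdiff hx hy hxy
    have hderiv_y := hF.mul_deriv_five_term hdiff hy hx (add_comm x y ▸ hxy)
    rw [mul_comm y x, mul_comm (1 - y) (1 - x)] at hderiv_y
    field_simp
    linear_combination x * hderiv_x - y * hderiv_y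

theorem apply_half (hF : SolvesFiveTerm F) : F (1 / 2) = 0 := by
  have h := hF.one_sub (1 / 2) (by norm_num)
  norm_num at h
  linarith

-- For `a = 1 + ψ` we have `a = (1 - a) ^ 2`, so the five arguments at `x = y = a` are
-- `a`, `a`, `1 - a`, `1 - a` and `a`.
theorem apply_one_add_goldenConj (hF : SolvesFiveTerm F) : F (1 + Real.goldenConj) = 0 := by
  set a : ℝ := 1 + Real.goldenConj with ha
  have ha_pos : 0 < a := by linarith [Real.neg_one_lt_goldenConj]
  have ha_sq : a = (1 - a) ^ 2 := by rw [ha]; linear_combination -Real.goldenConj_sq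
  have ha_half : a < 1 / 2 := by nlinarith [Real.goldenConj_neg]
  have ha' : 1 - a ≠ 0 := by linarith
  have hdiv : a / (1 - a) = 1 - a := by
    rw [div_eq_iff ha', ← sq]
    exact ha_sq
  have hmul : a * a / ((1 - a) * (1 - a)) = a := by
    rw [← sq (1 - a), ← ha_sq, mul_div_cancel_right₀ a ha_pos.ne']
  have h := hF.five_term a a ha_pos ha_pos (by linarith)
  rw [hdiv, hmul, hF.one_sub a ⟨ha_pos, by linarith⟩] at h
  linarith

theorem exists_deriv_eq_zero (hF : SolvesFiveTerm F) (hcont : ContinuousOn F (Ioo 0 1)) :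
    ∃ ξ ∈ Ioo (0 : ℝ) 1, deriv F ξ = 0 := by
  have hpos : 0 < 1 + Real.goldenConj := by linarith [Real.neg_one_lt_goldenConj]
  have hlt : 1 + Real.goldenConj < 1 / 2 := by
    nlinarith [Real.goldenConj_sq, Real.goldenConj_neg]
  obtain ⟨ξ, hξ, hξ_deriv⟩ := _root_.exists_deriv_eq_zero hlt
    (hcont.mono (Icc_subset_Ioo hpos (by norm_num)))
    (hF.apply_one_add_goldenConj.trans hF.apply_half.symm)
  exact ⟨ξ, ⟨hpos.trans hξ.1, hξ.2.trans (by norm_num)⟩, hξ_deriv⟩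

theorem eqOn_zero (hF : SolvesFiveTerm F) (hsmooth : ContDiffOn ℝ 3 F (Ioo 0 1)) :
    EqOn F 0 (Ioo 0 1) := by
  have hdiff : DifferentiableOn ℝ F (Ioo 0 1) := hsmooth.differentiableOn (by simp)
  have hsmooth' : ContDiffOn ℝ 2 (fun x => x * (1 - x) * deriv F x) (Ioo 0 1) :=
    (contDiff_id.mul (contDiff_const.sub contDiff_id)).contDiffOn.mul
      (hsmooth.deriv_of_isOpen isOpen_Ioo (by norm_num))
  obtain ⟨k, hk⟩ := (hF.solvesInformationEquation hdiff).exists_eqOn_const_mul_binEntropy hsmooth'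
  obtain ⟨ξ, hξ, hξ_deriv⟩ := hF.exists_deriv_eq_zero hdiff.continuousOn
  have hk_zero : k = 0 := by
    have h : ξ * (1 - ξ) * deriv F ξ = k * Real.binEntropy ξ := hk hξ
    rw [hξ_deriv, mul_zero, zero_eq_mul] at h
    exact h.resolve_right (Real.binEntropy_pos hξ.1 hξ.2).ne'
  have hderiv : EqOn (deriv F) 0 (Ioo 0 1) := fun x hx => by
    have h : x * (1 - x) * deriv F x = k * Real.binEntropy x := hk hx
    rw [hk_zero, zero_mul] at h
    exact (mul_eq_zero.1 h).resolve_left (mul_pos hx.1 (sub_pos.2 hx.2)).ne'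
  intro x hx
  exact (isOpen_Ioo.is_const_of_deriv_eq_zero isPreconnected_Ioo hdiff hderiv hx
    (by norm_num)).trans hF.apply_half

end SolvesFiveTerm

/-- The coordinates `log x`, `-log (1 - x)` and `log (x / (1 - x))`, whose differences are the
logarithms of the three compound arguments of the Spence–Abel relation. -/
noncomputable def spenceAbelCoordinate : Fin 3 → ℝ → ℝ :=
  ![Real.log, fun x => -Real.log (1 - x), Real.log + fun x => -Real.log (1 - x)]

/-- The signs of the three compound terms of the Spence–Abel relation once they are moved to the
right-hand side. -/
def spenceAbelSign : Fin 3 → ℝ := ![1, 1, -1]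

theorem isExpandingCoordinate_spenceAbelCoordinate (i : Fin 3) :
    IsExpandingCoordinate (spenceAbelCoordinate i) := by
  fin_cases i
  exacts [isExpandingCoordinate_log, isExpandingCoordinate_neg_log_one_sub,
    isExpandingCoordinate_log.add isExpandingCoordinate_neg_log_one_sub]

theorem sum_spenceAbelSign_mul (F : ℝ → ℝ) {x y : ℝ} (hxy : (x, y) ∈ P2) :
    ∑ i, spenceAbelSign i * F (Real.exp (spenceAbelCoordinate i x - spenceAbelCoordinate i y)) =
      F (x / y) + F ((1 - y) / (1 - x)) - F (x / y * ((1 - y) / (1 - x))) := by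
  obtain ⟨hx, hlt, hy⟩ : 0 < x ∧ x < y ∧ y < 1 := hxy
  have hlog : Real.exp (Real.log x - Real.log y) = x / y := by
    rw [Real.exp_sub, Real.exp_log hx, Real.exp_log (hx.trans hlt)]
  have hlog' : Real.exp (-Real.log (1 - x) - -Real.log (1 - y)) = (1 - y) / (1 - x) := by
    rw [neg_sub_neg, Real.exp_sub, Real.exp_log (sub_pos.2 hy),
      Real.exp_log (sub_pos.2 (hlt.trans hy))]
  simp only [Fin.sum_univ_three, spenceAbelCoordinate, spenceAbelSign, Matrix.cons_val,
    Pi.add_apply, add_sub_add_comm, Real.exp_add, hlog, hlog']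
  ring

theorem SolvesAE.solvesLogRelationAE_sub {R : ℝ × ℝ → ℝ} {C : ℝ} {L₁ L₂ : ℝ → ℝ}
    (h₁ : SolvesAE R C L₁) (h₂ : SolvesAE R C L₂) :
    SolvesLogRelationAE spenceAbelCoordinate spenceAbelSign (L₁ - L₂) := by
  have hae := (ae_restrict_iff' isOpen_P2.measurableSet).1 (h₁.1.and h₂.1)
  rw [Measure.volume_eq_prod] at hae
  filter_upwards [Measure.ae_ae_of_ae_prod hae] with x hx
  filter_upwards [hx] with y hy hxy
  obtain ⟨hL₁, hL₂⟩ := hy hxy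
  have harg : (y - 1) / (x - 1) = (1 - y) / (1 - x) := by
    rw [← neg_sub 1 y, ← neg_sub 1 x, neg_div_neg_eq]
  rw [sum_spenceAbelSign_mul _ hxy]
  simp only [Pi.sub_apply]
  rw [mul_div_mul_comm, harg] at hL₁ hL₂
  linear_combination hL₁ - hL₂

theorem SolvesAE.ae_sub_one_sub {R : ℝ × ℝ → ℝ} {C : ℝ} {L₁ L₂ : ℝ → ℝ}
    (h₁ : SolvesAE R C L₁) (h₂ : SolvesAE R C L₂) :
    ∀ᵐ x ∂volume.restrict (Ioo 0 1), (L₁ - L₂) (1 - x) = -(L₁ - L₂) x := by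
  filter_upwards [h₁.2, h₂.2] with x hx₁ hx₂
  rw [Pi.sub_apply, Pi.sub_apply, hx₁, hx₂]
  ring

theorem one_sub_eq_neg_of_ae_eq {F g : ℝ → ℝ}
    (hF : ∀ᵐ x ∂volume.restrict (Ioo 0 1), F (1 - x) = -F x)
    (hFg : F =ᵐ[volume.restrict (Ioo 0 1)] g) (hg : ContinuousOn g (Ioo 0 1)) :
    ∀ x ∈ Ioo (0 : ℝ) 1, g (1 - x) = -g x := by
  have hmaps : MapsTo (fun x : ℝ => 1 - x) (Ioo 0 1) (Ioo 0 1) := fun x hx =>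
    ⟨sub_pos.2 hx.2, sub_lt_self 1 hx.1⟩
  have hpres : MeasurePreserving (fun x : ℝ => 1 - x) (volume.restrict (Ioo 0 1))
      (volume.restrict (Ioo 0 1)) := by
    simpa using (Measure.measurePreserving_sub_left volume (1 : ℝ)).restrict_preimage
      (measurableSet_Ioo (a := (0 : ℝ)) (b := 1))
  refine Measure.eqOn_open_of_ae_eq (μ := volume) ?_ isOpen_Ioo
    (hg.comp (by fun_prop) hmaps) hg.neg
  filter_upwards [hF, hFg, hpres.quasiMeasurePreserving.ae hFg] with x hx hFgx hFgx'
  exact hFgx'.symm.trans (hx.trans (congrArg Neg.neg hFgx))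

theorem SolvesLogRelationAE.solvesFiveTerm {g : ℝ → ℝ}
    (hg : SolvesLogRelationAE spenceAbelCoordinate spenceAbelSign g)
    (hcont : ContinuousOn g (Ioo 0 1)) (hrefl : ∀ x ∈ Ioo (0 : ℝ) 1, g (1 - x) = -g x) :
    SolvesFiveTerm g where
  one_sub := hrefl
  five_term x y hx hy hxy := by
    have hxy' : (x, 1 - y) ∈ P2 := ⟨hx, lt_sub_iff_add_lt.2 hxy, sub_lt_self 1 hy⟩
    have h := hg.eq_add_sum_of_continuousOn isExpandingCoordinate_spenceAbelCoordinate hcont hxy'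
    rw [sum_spenceAbelSign_mul g hxy', hrefl y ⟨hy, by linarith⟩, sub_sub_cancel, div_mul_div_comm,
      mul_comm (1 - y) (1 - x)] at h
    linear_combination h

/-- **Uniqueness** for the perturbed Spence–Abel system: two measurable a.e. solutions with the
same data `(R, C)` agree almost everywhere on `(0,1)`. -/
theorem perturbed_spence_abel_uniqueness (R : ℝ × ℝ → ℝ)
    (hR : AEMeasurable R (volume.restrict P2)) (C : ℝ) (L₁ L₂ : ℝ → ℝ)
    (hL₁ : AEMeasurable L₁ (volume.restrict (Set.Ioo (0:ℝ) 1)))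
    (hL₂ : AEMeasurable L₂ (volume.restrict (Set.Ioo (0:ℝ) 1)))
    (h₁ : SolvesAE R C L₁) (h₂ : SolvesAE R C L₂) :
    ∀ᵐ x ∂(volume.restrict (Set.Ioo (0:ℝ) 1)), L₁ x = L₂ x := by
  have hrel := h₁.solvesLogRelationAE_sub h₂
  obtain ⟨g, hg, hLg⟩ := hrel.exists_contDiffOn_ae_eq isExpandingCoordinate_spenceAbelCoordinate
    (hL₁.sub hL₂)
  have hg_rel := hrel.congr isExpandingCoordinate_spenceAbelCoordinate hLg
  have hg_refl := one_sub_eq_neg_of_ae_eq (h₁.ae_sub_one_sub h₂) hLg hg.continuousOn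
  have hg_zero := (hg_rel.solvesFiveTerm hg.continuousOn hg_refl).eqOn_zero
    (contDiffOn_infty.1 hg 3)
  filter_upwards [hLg, ae_restrict_mem measurableSet_Ioo] with x hx hx01
  exact sub_eq_zero.1 (hx.trans (hg_zero hx01))
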